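/- Let α and β be real numbers with α > 0, β > 0 and α + β < 2, and set σ = αβ(α+β)/4. For real y > 2, define F(y) as the value of the continued fraction b_0(y) + K_{m=1}^∞(a_m/b_m(y)), where b_0(y) = y²−1−σ and for m ≥ 1: a_{2m} = (2m+α)(2m−α−β)(2m+β)/4, a_{2m−1} = (2m−α)(2m+α+β)(2m−β)/4, b_{2m}(y) = (y²−1)(2m+1), b_{2m−1}(y) = 1; and define Q(y) = (F(y)−σ)/(F(y)+σ). Then for every real x > 2, the continued fractions defining F(x) and F(x+2) converge, F(x)+σ ≠ 0, F(x+2)+σ ≠ 0, and Q(x) = [(x+1+α)(x+1−α−β)(x+1+β) / ((x+1−α)(x+1+α+β)(x+1−β))]·Q(x+2). -/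

import Mathlib

open Filter

noncomputable def cfA (a b : ℕ → ℝ) : ℕ → ℝ
  | 0 => 1
  | 1 => b 0
  | n + 2 => b (n + 1) * cfA a b (n + 1) + a (n + 1) * cfA a b n

noncomputable def cfB (a b : ℕ → ℝ) : ℕ → ℝ
  | 0 => 0
  | 1 => 1
  | n + 2 => b (n + 1) * cfB a b (n + 1) + a (n + 1) * cfB a b n

/-- The continued fraction `b 0 + K_{n=1}^∞ (a n / b n)` converges to `v`. -/
def CFConvergesTo (a b : ℕ → ℝ) (v : ℝ) : Prop :=
  (∀ᶠ n in atTop, cfB a b n ≠ 0) ∧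
    Tendsto (fun n => cfA a b n / cfB a b n) atTop (nhds v)
/-- `a_{2m} = (2m+α)(2m−α−β)(2m+β)/4`, `a_{2m−1} = (2m−α)(2m+α+β)(2m−β)/4`. -/
noncomputable def aSeq (α β : ℝ) : ℕ → ℝ := fun n =>
  if n % 2 = 0 then
    ((n : ℝ) + α) * ((n : ℝ) - α - β) * ((n : ℝ) + β) / 4
  else
    ((n : ℝ) + 1 - α) * ((n : ℝ) + 1 + α + β) * ((n : ℝ) + 1 - β) / 4

/-- `b_0(y) = y²−1−σ` with `σ = αβ(α+β)/4`, `b_{2m}(y) = (y²−1)(2m+1)`, `b_{2m−1}(y) = 1`. -/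
noncomputable def bSeq (α β : ℝ) (y : ℝ) : ℕ → ℝ := fun n =>
  if n = 0 then y ^ 2 - 1 - α * β * (α + β) / 4
  else if n % 2 = 0 then (y ^ 2 - 1) * ((n : ℝ) + 1) else 1

/-!
For positive elements, the recurrence expresses the convergents as partial sums of an alternating
series (Euler–Minding) whose terms decrease to `0` as soon as `∑ √(bₙbₙ₊₁/aₙ₊₁)` diverges; here
that series dominates a multiple of the harmonic one.

The functional equation comes from a Bauer–Muir transformation. For a suitable weight `w` quadratic
in `m`, the modified convergents `(A₂ₘ + wₘA₂ₘ₋₁) / (B₂ₘ + wₘB₂ₘ₋₁)` at the parameter `x` satisfy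
the same contracted recurrence as the convergents of odd order at `x + 2`. They are therefore a
Möbius transform of the latter, and in the limit `F(x) = (κF(x+2) + σ²) / (F(x+2) + κ)`. This
Möbius map has fixed points `±σ`, so `Q(x) = (κ-σ)/(κ+σ) · Q(x+2)`, and `κ ± σ` factor.
-/

open scoped Topology
open Finset (range)

section PositiveContinuedFractions

variable {a b : ℕ → ℝ}

lemma cfB_pos (ha : ∀ n, 0 < a (n + 1)) (hb : ∀ n, 0 < b (n + 1)) : ∀ n, 0 < cfB a b (n + 1)
  | 0 => one_pos
  | 1 => by simpa [cfB] using hb 0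
  | n + 2 => add_pos (mul_pos (hb _) (cfB_pos ha hb (n + 1))) (mul_pos (ha _) (cfB_pos ha hb n))

lemma eventually_cfB_pos (ha : ∀ n, 0 < a (n + 1)) (hb : ∀ n, 0 < b (n + 1)) :
    ∀ᶠ n in atTop, 0 < cfB a b n := by
  filter_upwards [eventually_ne_atTop 0] with n hn
  obtain ⟨m, rfl⟩ := Nat.exists_eq_succ_of_ne_zero hn
  exact cfB_pos ha hb m

lemma cfA_mul_cfB_sub (a b : ℕ → ℝ) (n : ℕ) :
    cfA a b (n + 1) * cfB a b n - cfA a b n * cfB a b (n + 1) =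
      (-1) ^ (n + 1) * ∏ i ∈ range n, a (i + 1) := by
  induction n with
  | zero => simp [cfA, cfB]
  | succ n ih =>
    rw [Finset.prod_range_succ, cfA, cfB, pow_succ]
    linear_combination (-a (n + 1)) * ih

/-- The reciprocal, up to sign, of the difference of the consecutive convergents
`cfA a b (n + 1) / cfB a b (n + 1)` and `cfA a b n / cfB a b n`. It is `0` at `n = 0`, where the
second convergent is infinite. -/
noncomputable def recipGap (a b : ℕ → ℝ) (n : ℕ) : ℝ :=
  cfB a b n * cfB a b (n + 1) / ∏ i ∈ range n, a (i + 1)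

lemma recipGap_succ (ha : ∀ n, a (n + 1) ≠ 0) (n : ℕ) :
    recipGap a b (n + 1) =
      recipGap a b n + b (n + 1) * cfB a b (n + 1) ^ 2 / ∏ i ∈ range (n + 1), a (i + 1) := by
  have hP : ∏ i ∈ range n, a (i + 1) ≠ 0 := Finset.prod_ne_zero_iff.2 fun i _ => ha i
  have han := ha n
  rw [recipGap, recipGap, cfB, Finset.prod_range_succ]
  field_simp
  ring

lemma recipGap_succ_pos (ha : ∀ n, 0 < a (n + 1)) (hb : ∀ n, 0 < b (n + 1)) (n : ℕ) :
    0 < recipGap a b (n + 1) :=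
  div_pos (mul_pos (cfB_pos ha hb n) (cfB_pos ha hb (n + 1))) (Finset.prod_pos fun i _ => ha i)

lemma recipGap_monotone (ha : ∀ n, 0 < a (n + 1)) (hb : ∀ n, 0 < b (n + 1)) :
    Monotone (recipGap a b) := by
  refine monotone_nat_of_le_succ fun n => ?_
  rw [recipGap_succ (fun n => (ha n).ne')]
  have hP : 0 < ∏ i ∈ range (n + 1), a (i + 1) := Finset.prod_pos fun i _ => ha i
  have hbn := hb n
  exact le_add_of_nonneg_right (by positivity)

lemma cfA_div_cfB_eq_sum (hB : ∀ n, cfB a b (n + 1) ≠ 0) (n : ℕ) :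
    cfA a b (n + 1) / cfB a b (n + 1) =
      b 0 + ∑ i ∈ range n, (-1) ^ i * (recipGap a b (i + 1))⁻¹ := by
  induction n with
  | zero => simp [cfA, cfB]
  | succ n ih =>
    have hB₁ := hB n
    have hB₂ := hB (n + 1)
    rw [Finset.sum_range_succ, ← add_assoc, ← ih, recipGap]
    field_simp
    linear_combination cfA_mul_cfB_sub a b (n + 1)

lemma recipGap_add_two_mul_le (ha : ∀ n, 0 < a (n + 1)) (hb : ∀ n, 0 < b (n + 1)) (n : ℕ) :
    recipGap a b n + 2 * √(b (n + 1) * b (n + 2) / a (n + 2)) * recipGap a b (n + 1) ≤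
      recipGap a b (n + 2) := by
  have ha₂ : 0 < a (n + 2) := ha (n + 1)
  have hb₁ : 0 < b (n + 1) := hb n
  have hb₂ : 0 < b (n + 2) := hb (n + 1)
  have hP : 0 < ∏ i ∈ range (n + 1), a (i + 1) := Finset.prod_pos fun i _ => ha i
  have amgm := two_mul_le_add_sq (√(b (n + 1)) * cfB a b (n + 1))
    (√(b (n + 2) / a (n + 2)) * cfB a b (n + 2))
  rw [mul_pow, mul_pow, Real.sq_sqrt hb₁.le, Real.sq_sqrt (by positivity)] at amgm
  have increments_ge : 2 * √(b (n + 1) * b (n + 2) / a (n + 2)) * recipGap a b (n + 1) ≤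
      b (n + 1) * cfB a b (n + 1) ^ 2 / ∏ i ∈ range (n + 1), a (i + 1) +
        b (n + 2) * cfB a b (n + 2) ^ 2 / ∏ i ∈ range (n + 2), a (i + 1) := by
    calc 2 * √(b (n + 1) * b (n + 2) / a (n + 2)) * recipGap a b (n + 1)
        = 2 * (√(b (n + 1)) * cfB a b (n + 1)) * (√(b (n + 2) / a (n + 2)) * cfB a b (n + 2)) /
            ∏ i ∈ range (n + 1), a (i + 1) := by
          rw [recipGap, mul_div_assoc (b (n + 1)), Real.sqrt_mul hb₁.le]
          ring
      _ ≤ (b (n + 1) * cfB a b (n + 1) ^ 2 + b (n + 2) / a (n + 2) * cfB a b (n + 2) ^ 2) /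
            ∏ i ∈ range (n + 1), a (i + 1) := div_le_div_of_nonneg_right amgm hP.le
      _ = _ := by
          rw [Finset.prod_range_succ _ (n + 1)]
          field_simp
  linarith [recipGap_succ (b := b) (fun n => (ha n).ne') n,
    recipGap_succ (b := b) (fun n => (ha n).ne') (n + 1)]

lemma recipGap_one_mul_sum_sqrt_le (ha : ∀ n, 0 < a (n + 1)) (hb : ∀ n, 0 < b (n + 1)) (n : ℕ) :
    recipGap a b 1 * ∑ i ∈ range n, √(b (i + 1) * b (i + 2) / a (i + 2)) ≤
      recipGap a b (n + 1) := by
  have hmono := recipGap_monotone ha hb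
  suffices h : 2 * (recipGap a b 1 * ∑ i ∈ range n, √(b (i + 1) * b (i + 2) / a (i + 2))) ≤
      recipGap a b n + recipGap a b (n + 1) by
    linarith [hmono n.le_succ]
  induction n with
  | zero => simpa [recipGap, cfB] using (recipGap_succ_pos ha hb 0).le
  | succ n ih =>
    have hgap : √(b (n + 1) * b (n + 2) / a (n + 2)) * recipGap a b 1 ≤
        √(b (n + 1) * b (n + 2) / a (n + 2)) * recipGap a b (n + 1) := by
      gcongr
      exact hmono (by lia)
    rw [Finset.sum_range_succ]
    linarith [recipGap_add_two_mul_le ha hb n]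

lemma tendsto_recipGap_atTop (ha : ∀ n, 0 < a (n + 1)) (hb : ∀ n, 0 < b (n + 1))
    (h : ¬Summable fun n => √(b (n + 1) * b (n + 2) / a (n + 2))) :
    Tendsto (fun n => recipGap a b (n + 1)) atTop atTop :=
  tendsto_atTop_mono (recipGap_one_mul_sum_sqrt_le ha hb) <|
    ((not_summable_iff_tendsto_nat_atTop_of_nonneg fun _ => Real.sqrt_nonneg _).1 h).const_mul_atTop
      (recipGap_succ_pos ha hb 0)

theorem exists_cfConvergesTo_of_not_summable (ha : ∀ n, 0 < a (n + 1)) (hb : ∀ n, 0 < b (n + 1))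
    (h : ¬Summable fun n => √(b (n + 1) * b (n + 2) / a (n + 2))) :
    ∃ v, CFConvergesTo a b v ∧ b 0 ≤ v := by
  have hB n : cfB a b (n + 1) ≠ 0 := (cfB_pos ha hb n).ne'
  have hanti : Antitone fun n => (recipGap a b (n + 1))⁻¹ := fun m n hmn =>
    inv_anti₀ (recipGap_succ_pos ha hb m) (recipGap_monotone ha hb (by lia))
  obtain ⟨s, hs⟩ := hanti.tendsto_alternating_series_of_tendsto_zero
    (tendsto_recipGap_atTop ha hb h).inv_tendsto_atTop
  have hs₀ : 0 ≤ s := by simpa using hanti.alternating_series_le_tendsto hs 0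
  refine ⟨b 0 + s, ⟨(eventually_cfB_pos ha hb).mono fun _ h => h.ne', ?_⟩, by linarith⟩
  rw [← tendsto_add_atTop_iff_nat 1]
  simpa only [cfA_div_cfB_eq_sum hB] using hs.const_add (b 0)

end PositiveContinuedFractions

section Mediants

lemma min_div_le_mediant {p q p' q' : ℝ} (hq : 0 < q) (hq' : 0 < q') :
    min (p / q) (p' / q') ≤ (p + p') / (q + q') := by
  rw [le_div_iff₀ (by positivity), mul_add]
  exact add_le_add ((le_div_iff₀ hq).1 (min_le_left _ _)) ((le_div_iff₀ hq').1 (min_le_right _ _))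

lemma mediant_le_max_div {p q p' q' : ℝ} (hq : 0 < q) (hq' : 0 < q') :
    (p + p') / (q + q') ≤ max (p / q) (p' / q') := by
  rw [div_le_iff₀ (by positivity), mul_add]
  exact add_le_add ((div_le_iff₀ hq).1 (le_max_left _ _)) ((div_le_iff₀ hq').1 (le_max_right _ _))

lemma tendsto_weighted_mediant {ι : Type*} {l : Filter ι} {p q p' q' w : ι → ℝ} {v : ℝ}
    (hq : ∀ᶠ i in l, 0 < q i) (hq' : ∀ᶠ i in l, 0 < q' i) (hw : ∀ᶠ i in l, 0 < w i)
    (h : Tendsto (fun i => p i / q i) l (𝓝 v)) (h' : Tendsto (fun i => p' i / q' i) l (𝓝 v)) :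
    Tendsto (fun i => (p i + w i * p' i) / (q i + w i * q' i)) l (𝓝 v) := by
  refine tendsto_of_tendsto_of_tendsto_of_le_of_le' (min_self v ▸ h.min h') (max_self v ▸ h.max h')
    ?_ ?_ <;> filter_upwards [hq, hq', hw] with i hqi hqi' hwi <;>
    rw [← mul_div_mul_left (p' i) (q' i) hwi.ne']
  · exact min_div_le_mediant hqi (mul_pos hwi hqi')
  · exact mediant_le_max_div hqi (mul_pos hwi hqi')

end Mediants

section ThreeTermRecurrences

/-- The three-term recurrence satisfied by the canonical numerators and denominators of
`b 0 + K (a n / b n)`, with the index shift of `cfA` and `cfB`. -/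
def IsThreeTermSolution (a b u : ℕ → ℝ) : Prop :=
  ∀ n, u (n + 2) = b (n + 1) * u (n + 1) + a (n + 1) * u n

lemma isThreeTermSolution_cfA (a b : ℕ → ℝ) : IsThreeTermSolution a b (cfA a b) := fun _ => rfl

lemma isThreeTermSolution_cfB (a b : ℕ → ℝ) : IsThreeTermSolution a b (cfB a b) := fun _ => rfl

namespace IsThreeTermSolution

variable {a b u v : ℕ → ℝ}

lemma linear_comb (hu : IsThreeTermSolution a b u) (hv : IsThreeTermSolution a b v) (c d : ℝ) :
    IsThreeTermSolution a b fun n => c * u n + d * v n := fun n => by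
  linear_combination c * hu n + d * hv n

lemma contraction (hu : IsThreeTermSolution a b u) (n : ℕ) :
    b (n + 1) * u (n + 4) =
      (b (n + 3) * (b (n + 2) * b (n + 1) + a (n + 2)) + a (n + 3) * b (n + 1)) * u (n + 2)
        - b (n + 3) * a (n + 2) * a (n + 1) * u n := by
  linear_combination b (n + 1) * hu (n + 2) + b (n + 1) * b (n + 3) * hu (n + 1)
    - b (n + 3) * a (n + 2) * hu n

end IsThreeTermSolution

end ThreeTermRecurrences

section Coefficients

variable {α β y : ℝ}

lemma aSeq_odd (α β : ℝ) (m : ℕ) :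
    aSeq α β (2 * m + 1) = (2 * m + 2 - α) * (2 * m + 2 + α + β) * (2 * m + 2 - β) / 4 := by
  rw [aSeq, if_neg (by lia)]
  push_cast
  ring

lemma aSeq_even (α β : ℝ) (m : ℕ) :
    aSeq α β (2 * m + 2) = (2 * m + 2 + α) * (2 * m + 2 - α - β) * (2 * m + 2 + β) / 4 := by
  rw [aSeq, if_pos (by lia)]
  push_cast
  ring

lemma bSeq_zero (α β y : ℝ) : bSeq α β y 0 = y ^ 2 - 1 - α * β * (α + β) / 4 := if_pos rfl

lemma bSeq_odd (α β y : ℝ) (m : ℕ) : bSeq α β y (2 * m + 1) = 1 := by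
  rw [bSeq, if_neg (by lia), if_neg (by lia)]

lemma bSeq_even (α β y : ℝ) (m : ℕ) :
    bSeq α β y (2 * m + 2) = (y ^ 2 - 1) * (2 * m + 3) := by
  rw [bSeq, if_neg (by lia), if_pos (by lia)]
  push_cast
  ring

lemma aSeq_succ_pos (hα : |α| < 2) (hβ : |β| < 2) (hαβ : |α + β| < 2) (n : ℕ) :
    0 < aSeq α β (n + 1) := by
  rw [abs_lt] at hα hβ hαβ
  obtain ⟨m, rfl | rfl⟩ := n.even_or_odd'
  · rw [aSeq_odd]
    exact div_pos (mul_pos (mul_pos (by linarith) (by linarith)) (by linarith)) four_pos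
  · rw [aSeq_even]
    exact div_pos (mul_pos (mul_pos (by linarith) (by linarith)) (by linarith)) four_pos

lemma aSeq_succ_le (hα : |α| < 2) (hβ : |β| < 2) (hαβ : |α + β| < 2) (n : ℕ) :
    aSeq α β (n + 1) ≤ (n + 4) ^ 3 / 4 := by
  rw [abs_lt] at hα hβ hαβ
  have prod_le {p q r t : ℝ} (hp : 0 ≤ p) (hq : 0 ≤ q) (hr : 0 ≤ r) (hpt : p ≤ t) (hqt : q ≤ t)
      (hrt : r ≤ t) : p * q * r / 4 ≤ t ^ 3 / 4 := by
    rw [pow_succ, sq]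
    have ht : 0 ≤ t := hp.trans hpt
    gcongr
  obtain ⟨m, rfl | rfl⟩ := n.even_or_odd'
  · rw [aSeq_odd]
    push_cast
    apply prod_le <;> linarith
  · rw [aSeq_even]
    push_cast
    apply prod_le <;> linarith

lemma bSeq_succ_pos (hy : 1 < y) (n : ℕ) : 0 < bSeq α β y (n + 1) := by
  obtain ⟨m, rfl | rfl⟩ := n.even_or_odd'
  · rw [bSeq_odd]
    exact one_pos
  · rw [bSeq_even]
    exact mul_pos (by nlinarith) (by positivity)

lemma le_bSeq_succ_mul_bSeq_succ_succ (hy : 1 < y) (n : ℕ) :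
    (y ^ 2 - 1) * (n + 2) ≤ bSeq α β y (n + 1) * bSeq α β y (n + 2) := by
  have hy' : 0 < y ^ 2 - 1 := by nlinarith
  obtain ⟨m, rfl | rfl⟩ := n.even_or_odd'
  · rw [bSeq_odd, bSeq_even, one_mul]
    push_cast
    gcongr
    norm_num
  · rw [bSeq_even, show 2 * m + 1 + 2 = 2 * (m + 1) + 1 by ring, bSeq_odd, mul_one]
    push_cast
    exact le_of_eq (by ring)

lemma not_summable_sqrt_bSeq_mul_bSeq_div_aSeq (hα : |α| < 2) (hβ : |β| < 2) (hαβ : |α + β| < 2)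
    (hy : 1 < y) :
    ¬Summable fun n => √(bSeq α β y (n + 1) * bSeq α β y (n + 2) / aSeq α β (n + 2)) := by
  have hy' : 0 < y ^ 2 - 1 := by nlinarith
  have le_sqrt (n : ℕ) : √(y ^ 2 - 1) * (1 / ((n + 5 : ℕ) : ℝ)) ≤
      √(bSeq α β y (n + 1) * bSeq α β y (n + 2) / aSeq α β (n + 2)) := by
    have ha := aSeq_succ_le hα hβ hαβ (n + 1)
    have ha₀ : 0 < aSeq α β (n + 2) := aSeq_succ_pos hα hβ hαβ (n + 1)
    push_cast at ha ⊢
    apply Real.le_sqrt_of_sq_le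
    calc (√(y ^ 2 - 1) * (1 / ((n : ℝ) + 5))) ^ 2
        = (y ^ 2 - 1) / ((n : ℝ) + 5) ^ 2 := by
          rw [mul_pow, Real.sq_sqrt hy'.le, one_div, inv_pow, div_eq_mul_inv]
      _ ≤ (y ^ 2 - 1) * (n + 2) / (((n : ℝ) + 1 + 4) ^ 3 / 4) := by
          rw [div_le_div_iff₀ (by positivity) (by positivity), mul_assoc]
          gcongr
          nlinarith [pow_pos (show (0 : ℝ) < n + 5 by positivity) 2]
      _ ≤ _ := by
          have hb : 0 ≤ bSeq α β y (n + 1) * bSeq α β y (n + 2) :=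
            (mul_pos (bSeq_succ_pos hy n) (bSeq_succ_pos hy (n + 1))).le
          exact div_le_div₀ hb (le_bSeq_succ_mul_bSeq_succ_succ hy n) ha₀ ha
  intro h
  have hharm := h.of_nonneg_of_le (fun n => by positivity) le_sqrt
  rw [summable_mul_left_iff (Real.sqrt_pos.2 hy').ne',
    summable_nat_add_iff (f := fun n : ℕ => 1 / (n : ℝ))] at hharm
  exact Real.not_summable_one_div_natCast hharm

lemma eventually_cfB_aSeq_bSeq_pos (hα : |α| < 2) (hβ : |β| < 2) (hαβ : |α + β| < 2)
    (hy : 1 < y) : ∀ᶠ n in atTop, 0 < cfB (aSeq α β) (bSeq α β y) n :=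
  eventually_cfB_pos (aSeq_succ_pos hα hβ hαβ) (bSeq_succ_pos hy)

theorem exists_cfConvergesTo_aSeq_bSeq (hα : |α| < 2) (hβ : |β| < 2) (hαβ : |α + β| < 2)
    (hy : 1 < y) :
    ∃ v, CFConvergesTo (aSeq α β) (bSeq α β y) v ∧ v + α * β * (α + β) / 4 ≠ 0 := by
  obtain ⟨v, hv, hle⟩ := exists_cfConvergesTo_of_not_summable (aSeq_succ_pos hα hβ hαβ)
    (bSeq_succ_pos hy) (not_summable_sqrt_bSeq_mul_bSeq_div_aSeq hα hβ hαβ hy)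
  rw [bSeq_zero] at hle
  exact ⟨v, hv, by nlinarith⟩

end Coefficients

section BauerMuir

/-- The weight of the Bauer–Muir transformation from `y` to `y + 2`: a quadratic polynomial in `m`,
chosen so that `bauerMuir_contraction` holds. -/
noncomputable def bauerMuirWeight (α β y m : ℝ) : ℝ :=
  (y + 1) * (y ^ 2 - 2 * y + 5 - (α ^ 2 + α * β + β ^ 2)) / 4 + α * β * (α + β) / 4
    - (y + 1) * (y - 3) * m + 2 * (y + 1) * m ^ 2

/-- The Bauer–Muir transform of a solution `u` of the recurrence at the parameter `y`; the
modified convergents are the quotients of the transforms of `cfA` and `cfB`. -/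
noncomputable def bauerMuir (α β y : ℝ) (u : ℕ → ℝ) (m : ℕ) : ℝ :=
  u (2 * m + 1) + bauerMuirWeight α β y m * u (2 * m)

/-- The coefficient `κ` of the Möbius transformation `z ↦ (κ z + σ²) / (z + κ)`, with
`σ = αβ(α+β)/4`, that sends the value of the continued fraction at `x + 2` to its value at `x`. -/
noncomputable def mobiusCoeff (α β x : ℝ) : ℝ :=
  ((x + 1) ^ 3 - (α ^ 2 + α * β + β ^ 2) * (x + 1)) / 4

variable {α β y : ℝ} {u v : ℕ → ℝ}

lemma eventually_bauerMuirWeight_pos (α β : ℝ) (hy : -1 < y) :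
    ∀ᶠ m : ℕ in atTop, 0 < bauerMuirWeight α β y m := by
  have hlin : Tendsto (fun m : ℕ => (y + 1) * (2 * (m : ℝ) + (3 - y))) atTop atTop :=
    (tendsto_atTop_add_const_right _ _
      (tendsto_natCast_atTop_atTop.const_mul_atTop two_pos)).const_mul_atTop (by linarith)
  have hquad := tendsto_atTop_add_const_right _ (bauerMuirWeight α β y 0)
    (tendsto_natCast_atTop_atTop.atTop_mul_atTop₀ hlin)
  filter_upwards [hquad.eventually_gt_atTop 0] with m hm
  refine hm.trans_eq ?_
  unfold bauerMuirWeight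
  ring

lemma bauerMuir_contraction (hu : IsThreeTermSolution (aSeq α β) (bSeq α β y) u) (m : ℕ) :
    bauerMuir α β y u (m + 2) =
      (bSeq α β (y + 2) (2 * m + 2) + aSeq α β (2 * m + 2) + aSeq α β (2 * m + 3)) *
          bauerMuir α β y u (m + 1)
        - aSeq α β (2 * m + 2) * aSeq α β (2 * m + 1) * bauerMuir α β y u m := by
  simp only [bauerMuir, show 2 * (m + 2) = 2 * m + 4 by ring, show 2 * (m + 1) = 2 * m + 2 by ring,
    hu (2 * m), hu (2 * m + 1), hu (2 * m + 2), hu (2 * m + 3)]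
  rw [show 2 * m + 3 + 1 = 2 * (m + 1) + 2 by ring, show 2 * m + 3 = 2 * (m + 1) + 1 by ring]
  simp only [aSeq_odd, aSeq_even, bSeq_odd, bSeq_even, bauerMuirWeight]
  push_cast
  ring

lemma eq_bauerMuir (hu : IsThreeTermSolution (aSeq α β) (bSeq α β y) u)
    (hv : IsThreeTermSolution (aSeq α β) (bSeq α β (y + 2)) v)
    (h₀ : v 0 = bauerMuir α β y u 0) (h₁ : v 2 = bauerMuir α β y u 1) :
    ∀ m, v (2 * m) = bauerMuir α β y u m
  | 0 => h₀
  | 1 => h₁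
  | m + 2 => by
    have hcontr := hv.contraction (2 * m)
    rw [bSeq_odd, show 2 * m + 3 = 2 * (m + 1) + 1 by ring, bSeq_odd,
      show 2 * m + 2 = 2 * (m + 1) by ring, eq_bauerMuir hu hv h₀ h₁ m,
      eq_bauerMuir hu hv h₀ h₁ (m + 1)] at hcontr
    rw [bauerMuir_contraction hu]
    linear_combination hcontr

lemma bauerMuir_cfA (α β x : ℝ) (m : ℕ) :
    bauerMuir α β x (cfA (aSeq α β) (bSeq α β x)) m =
      mobiusCoeff α β x * cfA (aSeq α β) (bSeq α β (x + 2)) (2 * m)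
        + (α * β * (α + β) / 4) ^ 2 * cfB (aSeq α β) (bSeq α β (x + 2)) (2 * m) := by
  refine (eq_bauerMuir (isThreeTermSolution_cfA _ _)
    ((isThreeTermSolution_cfA _ _).linear_comb (isThreeTermSolution_cfB _ _) _ _) ?_ ?_ m).symm
  · simp only [bauerMuir, cfA, cfB, bSeq_zero, bauerMuirWeight, mobiusCoeff]
    push_cast
    ring
  · simp only [bauerMuir, cfA, cfB, bSeq_zero, bSeq_odd α β _ 0, bSeq_even α β _ 0, aSeq_odd α β 0,
      aSeq_even α β 0, bauerMuirWeight, mobiusCoeff]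
    push_cast
    ring

lemma bauerMuir_cfB (α β x : ℝ) (m : ℕ) :
    bauerMuir α β x (cfB (aSeq α β) (bSeq α β x)) m =
      cfA (aSeq α β) (bSeq α β (x + 2)) (2 * m)
        + mobiusCoeff α β x * cfB (aSeq α β) (bSeq α β (x + 2)) (2 * m) := by
  rw [← one_mul (cfA _ _ _)]
  refine (eq_bauerMuir (isThreeTermSolution_cfB _ _)
    ((isThreeTermSolution_cfA _ _).linear_comb (isThreeTermSolution_cfB _ _) _ _) ?_ ?_ m).symm
  · simp only [bauerMuir, cfA, cfB, bauerMuirWeight, mobiusCoeff]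
    push_cast
    ring
  · simp only [bauerMuir, cfA, cfB, bSeq_zero, bSeq_odd α β _ 0, bSeq_even α β _ 0, aSeq_odd α β 0,
      aSeq_even α β 0, bauerMuirWeight, mobiusCoeff]
    push_cast
    ring

end BauerMuir

section FunctionalEquation

variable {α β x : ℝ}

lemma tendsto_two_mul_atTop : Tendsto (fun m : ℕ => 2 * m) atTop atTop :=
  tendsto_id.const_mul_atTop' two_pos

lemma tendsto_bauerMuir_div (hα : |α| < 2) (hβ : |β| < 2) (hαβ : |α + β| < 2) (hx : 1 < x) {v : ℝ}
    (hv : CFConvergesTo (aSeq α β) (bSeq α β x) v) :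
    Tendsto (fun m => bauerMuir α β x (cfA (aSeq α β) (bSeq α β x)) m /
      bauerMuir α β x (cfB (aSeq α β) (bSeq α β x)) m) atTop (𝓝 v) := by
  have hB := eventually_cfB_aSeq_bSeq_pos hα hβ hαβ hx
  have hodd : Tendsto (fun m : ℕ => 2 * m + 1) atTop atTop :=
    (tendsto_add_atTop_nat 1).comp tendsto_two_mul_atTop
  exact tendsto_weighted_mediant (hodd.eventually hB) (tendsto_two_mul_atTop.eventually hB)
    (eventually_bauerMuirWeight_pos α β (by linarith)) (hv.2.comp hodd)
    (hv.2.comp tendsto_two_mul_atTop)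

lemma eventually_bauerMuir_cfB_pos (hα : |α| < 2) (hβ : |β| < 2) (hαβ : |α + β| < 2)
    (hx : 1 < x) :
    ∀ᶠ m in atTop, 0 < bauerMuir α β x (cfB (aSeq α β) (bSeq α β x)) m := by
  filter_upwards [eventually_bauerMuirWeight_pos α β (by linarith : -1 < x),
    tendsto_two_mul_atTop.eventually (eventually_cfB_aSeq_bSeq_pos hα hβ hαβ hx)] with m hw hB
  exact add_pos (cfB_pos (aSeq_succ_pos hα hβ hαβ) (bSeq_succ_pos hx) _) (mul_pos hw hB)

theorem value_mul_value_add_mobiusCoeff (hα : |α| < 2) (hβ : |β| < 2) (hαβ : |α + β| < 2)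
    (hx : 1 < x) {F₁ F₂ : ℝ} (h₁ : CFConvergesTo (aSeq α β) (bSeq α β x) F₁)
    (h₂ : CFConvergesTo (aSeq α β) (bSeq α β (x + 2)) F₂) :
    F₁ * (F₂ + mobiusCoeff α β x) = mobiusCoeff α β x * F₂ + (α * β * (α + β) / 4) ^ 2 := by
  have h₂' := h₂.2.comp tendsto_two_mul_atTop
  refine tendsto_nhds_unique_of_eventuallyEq
    ((tendsto_bauerMuir_div hα hβ hαβ hx h₁).mul (h₂'.add_const (mobiusCoeff α β x)))
    ((h₂'.const_mul (mobiusCoeff α β x)).add_const ((α * β * (α + β) / 4) ^ 2)) ?_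
  filter_upwards [eventually_bauerMuir_cfB_pos hα hβ hαβ hx,
    tendsto_two_mul_atTop.eventually h₂.1] with m hpos hne
  rw [Function.comp_apply, bauerMuir_cfA]
  rw [bauerMuir_cfB] at hpos ⊢
  have hpos' := hpos.ne'
  field_simp

lemma mobiusCoeff_sub (α β x : ℝ) :
    mobiusCoeff α β x - α * β * (α + β) / 4 =
      (x + 1 + α) * (x + 1 - α - β) * (x + 1 + β) / 4 := by
  unfold mobiusCoeff
  ring

lemma mobiusCoeff_add (α β x : ℝ) :
    mobiusCoeff α β x + α * β * (α + β) / 4 =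
      (x + 1 - α) * (x + 1 + α + β) * (x + 1 - β) / 4 := by
  unfold mobiusCoeff
  ring

lemma mobiusCoeff_add_pos (hα : |α| < 2) (hβ : |β| < 2) (hαβ : |α + β| < 2) (hx : 1 < x) :
    0 < mobiusCoeff α β x + α * β * (α + β) / 4 := by
  rw [abs_lt] at hα hβ hαβ
  rw [mobiusCoeff_add]
  exact div_pos (mul_pos (mul_pos (by linarith) (by linarith)) (by linarith)) four_pos

lemma sub_div_add_eq_of_mobius {K : Type*} [Field K] {z w κ σ : K} (hz : z + σ ≠ 0)
    (hw : w + σ ≠ 0) (hκ : κ + σ ≠ 0) (h : z * (w + κ) = κ * w + σ ^ 2) :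
    (z - σ) / (z + σ) = (κ - σ) / (κ + σ) * ((w - σ) / (w + σ)) := by
  rw [div_mul_div_comm, div_eq_div_iff hz (mul_ne_zero hκ hw)]
  linear_combination 2 * σ * h

end FunctionalEquation

theorem stmt19_general (α β : ℝ) (hα : |α| < 2) (hβ : |β| < 2) (hαβ : |α + β| < 2)
    (x : ℝ) (hx : 1 < x) :
    ∃ F1 F2 : ℝ, CFConvergesTo (aSeq α β) (bSeq α β x) F1 ∧
      CFConvergesTo (aSeq α β) (bSeq α β (x + 2)) F2 ∧
      F1 + α * β * (α + β) / 4 ≠ 0 ∧ F2 + α * β * (α + β) / 4 ≠ 0 ∧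
      (F1 - α * β * (α + β) / 4) / (F1 + α * β * (α + β) / 4) =
        ((x + 1 + α) * (x + 1 - α - β) * (x + 1 + β) /
            ((x + 1 - α) * (x + 1 + α + β) * (x + 1 - β))) *
          ((F2 - α * β * (α + β) / 4) / (F2 + α * β * (α + β) / 4)) := by
  obtain ⟨F₁, conv₁, ne₁⟩ := exists_cfConvergesTo_aSeq_bSeq hα hβ hαβ hx
  obtain ⟨F₂, conv₂, ne₂⟩ :=
    exists_cfConvergesTo_aSeq_bSeq hα hβ hαβ (by linarith : 1 < x + 2)
  refine ⟨F₁, F₂, conv₁, conv₂, ne₁, ne₂, ?_⟩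
  have hQ := sub_div_add_eq_of_mobius ne₁ ne₂ (mobiusCoeff_add_pos hα hβ hαβ hx).ne'
    (value_mul_value_add_mobiusCoeff hα hβ hαβ hx conv₁ conv₂)
  rwa [mobiusCoeff_sub, mobiusCoeff_add, div_div_div_cancel_right₀ four_ne_zero] at hQ

theorem stmt19 (α β : ℝ) (hα : 0 < α) (hβ : 0 < β) (hαβ : α + β < 2)
    (x : ℝ) (hx : 2 < x) :
    ∃ F1 F2 : ℝ, CFConvergesTo (aSeq α β) (bSeq α β x) F1 ∧
      CFConvergesTo (aSeq α β) (bSeq α β (x + 2)) F2 ∧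
      F1 + α * β * (α + β) / 4 ≠ 0 ∧ F2 + α * β * (α + β) / 4 ≠ 0 ∧
      (F1 - α * β * (α + β) / 4) / (F1 + α * β * (α + β) / 4) =
        ((x + 1 + α) * (x + 1 - α - β) * (x + 1 + β) /
            ((x + 1 - α) * (x + 1 + α + β) * (x + 1 - β))) *
          ((F2 - α * β * (α + β) / 4) / (F2 + α * β * (α + β) / 4)) :=
  stmt19_general α β (abs_lt.2 ⟨by linarith, by linarith⟩) (abs_lt.2 ⟨by linarith, by linarith⟩)
    (abs_lt.2 ⟨by linarith, by linarith⟩) x (by linarith)
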